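/- Let f ∈ 𝒢 and g ∈ 𝒦, and let β ≥ 0, α + β ≤ 1 when α ≥ 0, and 3β - α ≤ 3 when α < 0. Then Re(1 + z C_{α,β}[f,g]''(z)/C_{α,β}[f,g]'(z)) > 0 on the unit disk, i.e., C_{α,β}[f,g] is convex. -/

import Mathlib

open Complex Metric

/-- The class 𝔉: analytic on the unit disk, `f 0 = 0`, `f' 0 = 1`, `f'` nonvanishing. -/
def Fclass (f : ℂ → ℂ) : Prop :=
  DifferentiableOn ℂ f (ball 0 1) ∧ f 0 = 0 ∧ deriv f 0 = 1 ∧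
    ∀ z ∈ ball (0:ℂ) 1, deriv f z ≠ 0

/-- Normalized convex functions: `Re (1 + z f''/f') > 0` on the unit disk. -/
def Kclass (f : ℂ → ℂ) : Prop :=
  Fclass f ∧ ∀ z ∈ ball (0:ℂ) 1, 0 < (1 + z * deriv (deriv f) z / deriv f z).re

/-!
If `p` maps the disk `|z| < |z₀|` into a disk `D(c, R)` and `p z₀` lies on the boundary circle, then
`z₀ p'(z₀) = m (p(z₀) - c)` with `m` real and `m ≥ |p(z₀) - p(0)|² / (R² - |p(0) - c|²)`. When the
circle passes through the origin, `Re (c / p(z₀)) = 1/2`, so `Re (z₀ p'(z₀) / p(z₀)) = m / 2`, and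
an upper bound on `Re (z p'/p)` prevents `p` from ever leaving the disk.

For `f ∈ 𝒢` this keeps `f'` in `D(1, 1)`, hence also its radial average `f(z)/z`, and then
`zf'/f` in `D(2/3, 2/3)`, since `zp'/p + p = 1 + zf''/f'` for `p = zf'/f`. For `g ∈ 𝒦` it keeps
`(g')^(-1/2)` in `D(1, 1)`, so `g'` omits the negative axis. Hence the integrand
`(f(w)/w)^α (g'(w))^β` is holomorphic, and `1 + zC''/C'` is the real combination
`α (zf'/f) + β (1 + zg''/g') + (1 - α - β)`, whose real part is positive on the stated
range of `(α, β)`.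
-/

section BoundarySchwarzPick

open Set

variable {z₀ : ℂ}

lemma exists_nonneg_mul_deriv_eq_of_isMaxOn_norm {φ : ℂ → ℂ} (hφ : DifferentiableAt ℂ φ z₀)
    (hne : φ z₀ ≠ 0) (hmax : IsMaxOn (fun z => ‖φ z‖) (ball 0 ‖z₀‖) z₀) :
    ∃ m : ℝ, 0 ≤ m ∧ z₀ * deriv φ z₀ = m * φ z₀ := by
  set A := deriv φ z₀ / φ z₀ * z₀ with hA
  have hmax_re : IsMaxOn (fun z => (φ z / φ z₀).re) (ball 0 ‖z₀‖) z₀ := fun z hz =>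
    calc (φ z / φ z₀).re ≤ ‖φ z / φ z₀‖ := re_le_norm _
      _ ≤ 1 := by
        rw [norm_div]
        exact div_le_one_of_le₀ (hmax hz) (norm_nonneg _)
      _ = (φ z₀ / φ z₀).re := by rw [div_self hne, one_re]
  have hderiv := reCLM.hasFDerivAt.comp z₀
    ((hφ.hasDerivAt.div_const (φ z₀)).hasFDerivAt.restrictScalars ℝ)
  have hinward : ∀ u : ℂ, ‖u‖ ≤ 1 → (A * (u - 1)).re ≤ 0 := by
    intro u hu
    rcases eq_or_ne z₀ (z₀ * u) with h | h
    · have : A * (u - 1) = 0 := by linear_combination -(deriv φ z₀ / φ z₀) * h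
      rw [this, zero_re]
    · have hu_mem : z₀ * u ∈ closedBall 0 ‖z₀‖ := by
        simpa using mul_le_of_le_one_right (norm_nonneg z₀) hu
      have hle := hmax_re.localize.hasFDerivWithinAt_nonpos hderiv.hasFDerivWithinAt
        (sub_mem_posTangentConeAt_of_openSegment_subset
          (openSegment_subset_ball_of_ne (by simp) hu_mem h))
      simp only [ContinuousLinearMap.comp_apply, ContinuousLinearMap.coe_restrictScalars',
        ContinuousLinearMap.toSpanSingleton_apply, smul_eq_mul, reCLM_apply] at hle
      have hfactor : A * (u - 1) = (z₀ * u - z₀) * (deriv φ z₀ / φ z₀) := by rw [hA]; ring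
      rwa [hfactor]
  -- For `A = 0` the direction below is `0 / 0 = 0`.
  have hnorm_le : ‖A‖ ≤ A.re := by
    have h := hinward ((starRingEnd ℂ) A / ‖A‖) (by simp [div_self_le_one])
    rwa [mul_sub, mul_one, ← mul_div_assoc, mul_conj', sub_re, sub_nonpos, sq,
      mul_self_div_self, ofReal_re] at h
  have hreal : A = ‖A‖ := RCLike.norm_le_re_iff_eq_norm.1 hnorm_le
  refine ⟨‖A‖, norm_nonneg A, ?_⟩
  rw [← hreal, hA]
  field_simp

lemma deriv_eq_dslope_add {f : ℂ → ℂ} {c z : ℂ} (h : DifferentiableAt ℂ (dslope f c) z) :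
    deriv f z = dslope f c z + (z - c) * deriv (dslope f c) z := by
  have hf : f = fun w => f c + (w - c) * dslope f c w := by
    ext w
    rw [← smul_eq_mul, sub_smul_dslope, add_sub_cancel]
  have hprod := (((hasDerivAt_id z).sub_const c).mul h.hasDerivAt).const_add (f c)
  conv_lhs => rw [hf]
  simpa using hprod.deriv

/-- **Jack's lemma**. -/
lemma exists_one_le_mul_deriv_eq_of_mapsTo_ball {ω : ℂ → ℂ}
    (hω : DifferentiableOn ℂ ω (ball 0 ‖z₀‖)) (hω₀ : DifferentiableAt ℂ ω z₀) (h0 : ω 0 = 0)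
    (hmaps : MapsTo ω (ball 0 ‖z₀‖) (closedBall 0 1)) (h1 : ‖ω z₀‖ = 1) :
    ∃ k : ℝ, 1 ≤ k ∧ z₀ * deriv ω z₀ = k * ω z₀ := by
  have hz₀ : z₀ ≠ 0 := by
    rintro rfl
    simp [h0] at h1
  have hmul : z₀ * dslope ω 0 z₀ = ω z₀ := by simpa [h0] using sub_smul_dslope ω 0 z₀
  have hnorm : ‖dslope ω 0 z₀‖ = 1 / ‖z₀‖ := by
    rw [eq_div_iff (norm_ne_zero_iff.2 hz₀), mul_comm, ← norm_mul, hmul, h1]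
  have hd : DifferentiableAt ℂ (dslope ω 0) z₀ := (differentiableAt_dslope_of_ne hz₀).2 hω₀
  obtain ⟨m, hm, hmeq⟩ := exists_nonneg_mul_deriv_eq_of_isMaxOn_norm hd
    (norm_ne_zero_iff.1 (by simpa [hnorm] using hz₀)) (fun z hz =>
      (norm_dslope_le_div_of_mapsTo_ball hω (by rwa [h0]) hz).trans_eq hnorm.symm)
  refine ⟨1 + m, by linarith, ?_⟩
  push_cast
  rw [deriv_eq_dslope_add hd, ← hmul]
  linear_combination z₀ * hmeq

/-- The Möbius map carrying the disk of radius `R` about `0` onto the unit disk and `a` to `0`. -/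
noncomputable def diskMobius (R : ℝ) (a w : ℂ) : ℂ :=
  R * (w - a) / (R ^ 2 - (starRingEnd ℂ) a * w)

namespace diskMobius

variable {R : ℝ} {a w : ℂ}

lemma denom_ne_zero (ha : ‖a‖ < R) (hw : ‖w‖ ≤ R) : (R : ℂ) ^ 2 - (starRingEnd ℂ) a * w ≠ 0 := by
  intro h
  have hnorm := congrArg norm (sub_eq_zero.1 h)
  rw [norm_pow, norm_mul, RCLike.norm_conj, norm_real, Real.norm_eq_abs, sq_abs] at hnorm
  nlinarith [norm_nonneg a, norm_nonneg w]

lemma one_sub_normSq (ha : ‖a‖ < R) (hw : ‖w‖ ≤ R) :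
    1 - normSq (diskMobius R a w) =
      (R ^ 2 - normSq w) * (R ^ 2 - normSq a) / normSq (R ^ 2 - (starRingEnd ℂ) a * w) := by
  have hden := normSq_pos.2 (denom_ne_zero ha hw)
  rw [diskMobius, normSq_div, eq_div_iff hden.ne', sub_mul, div_mul_cancel₀ _ hden.ne']
  simp only [pow_two, normSq_apply, sub_re, sub_im, mul_re, mul_im, ofReal_re, ofReal_im, conj_re,
    conj_im]
  ring

lemma norm_le_one (ha : ‖a‖ < R) (hw : ‖w‖ ≤ R) : ‖diskMobius R a w‖ ≤ 1 := by
  have h := one_sub_normSq ha hw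
  have hnonneg : 0 ≤ 1 - normSq (diskMobius R a w) := by
    rw [h, normSq_eq_norm_sq w, normSq_eq_norm_sq a]
    refine div_nonneg (mul_nonneg ?_ ?_) (normSq_nonneg _) <;>
      nlinarith [norm_nonneg a, norm_nonneg w]
  rw [normSq_eq_norm_sq] at hnonneg
  exact (sq_le_one_iff₀ (norm_nonneg _)).1 (by linarith)

lemma norm_eq_one (ha : ‖a‖ < R) (hw : ‖w‖ = R) : ‖diskMobius R a w‖ = 1 := by
  have h := one_sub_normSq ha hw.le
  rw [normSq_eq_norm_sq w, hw, sub_self, zero_mul, zero_div, normSq_eq_norm_sq, sub_eq_zero] at h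
  exact (pow_eq_one_iff_of_nonneg (norm_nonneg _) two_ne_zero).1 h.symm

protected lemma hasDerivAt (ha : ‖a‖ < R) (hw : ‖w‖ ≤ R) :
    HasDerivAt (diskMobius R a)
      (R * (R ^ 2 - ‖a‖ ^ 2) / (R ^ 2 - (starRingEnd ℂ) a * w) ^ 2) w := by
  refine ((((hasDerivAt_id w).sub_const a).const_mul (R : ℂ)).div
    (((hasDerivAt_id w).const_mul ((starRingEnd ℂ) a)).const_sub ((R : ℂ) ^ 2))
    (denom_ne_zero ha hw)).congr_deriv ?_
  rw [← conj_mul']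
  simp only [id_eq]
  ring

lemma mul_deriv_mul_norm_sub_sq (ha : ‖a‖ < R) (hw : ‖w‖ = R) :
    w * deriv (diskMobius R a) w * ‖w - a‖ ^ 2 = (R ^ 2 - ‖a‖ ^ 2) * diskMobius R a w := by
  have hden := denom_ne_zero ha hw.le
  have hden_eq : (R : ℂ) ^ 2 - (starRingEnd ℂ) a * w = w * (starRingEnd ℂ) (w - a) := by
    rw [← hw, ← mul_conj', map_sub]
    ring
  rw [(diskMobius.hasDerivAt ha hw.le).deriv, diskMobius, ← mul_conj' (w - a)]
  generalize (R : ℂ) ^ 2 - (starRingEnd ℂ) a * w = D at hden hden_eq ⊢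
  field_simp
  rw [hden_eq]
  ring

end diskMobius

/-- Composing with a disk automorphism that sends `p 0` to the centre reduces this to Jack's
lemma. -/
lemma exists_le_mul_deriv_eq_of_mapsTo_ball {p : ℂ → ℂ} {c : ℂ} {R : ℝ} (hz₀ : z₀ ≠ 0)
    (hp : DifferentiableOn ℂ p (ball 0 ‖z₀‖)) (hp₀ : DifferentiableAt ℂ p z₀)
    (hmaps : MapsTo p (ball 0 ‖z₀‖) (ball c R)) (hR : ‖p z₀ - c‖ = R) :
    ∃ m : ℝ, ‖p z₀ - p 0‖ ^ 2 / (R ^ 2 - ‖p 0 - c‖ ^ 2) ≤ m ∧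
      z₀ * deriv p z₀ = m * (p z₀ - c) := by
  have hnorm : ∀ z ∈ ball (0 : ℂ) ‖z₀‖, ‖p z - c‖ < R := fun z hz => by
    simpa [dist_eq_norm] using hmaps hz
  set a := p 0 - c with ha_def
  have ha : ‖a‖ < R := hnorm 0 (mem_ball_self (norm_pos_iff.2 hz₀))
  have hM : ∀ z, ‖p z - c‖ ≤ R → DifferentiableAt ℂ (diskMobius R a) (p z - c) := fun z hz =>
    (diskMobius.hasDerivAt ha hz).differentiableAt
  have hω := ((hM _ hR.le).hasDerivAt).comp z₀ (hp₀.hasDerivAt.sub_const c)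
  obtain ⟨k, hk, hjack⟩ := exists_one_le_mul_deriv_eq_of_mapsTo_ball
    (ω := diskMobius R a ∘ fun z => p z - c)
    (fun z hz => (hM z (hnorm z hz).le).comp_differentiableWithinAt z ((hp z hz).sub_const c))
    hω.differentiableAt (by simp [diskMobius, ha_def])
    (fun z hz => by simpa using diskMobius.norm_le_one ha (hnorm z hz).le)
    (diskMobius.norm_eq_one ha hR)
  have hgap : 0 < R ^ 2 - ‖a‖ ^ 2 := by nlinarith [norm_nonneg a]
  have hgap_ne : (R : ℂ) ^ 2 - (‖a‖ : ℂ) ^ 2 ≠ 0 := mod_cast hgap.ne'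
  have hsub : p z₀ - p 0 = p z₀ - c - a := by rw [ha_def, sub_sub_sub_cancel_right]
  have hcircle := diskMobius.mul_deriv_mul_norm_sub_sq ha hR
  have hM' : deriv (diskMobius R a) (p z₀ - c) ≠ 0 := fun h => by
    rw [h, mul_zero, zero_mul, eq_comm, mul_eq_zero_iff_left hgap_ne, ← norm_eq_zero,
      diskMobius.norm_eq_one ha hR] at hcircle
    exact one_ne_zero hcircle
  refine ⟨k * (‖p z₀ - p 0‖ ^ 2 / (R ^ 2 - ‖a‖ ^ 2)), le_mul_of_one_le_left (by positivity) hk, ?_⟩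
  rw [hω.deriv, Function.comp_apply] at hjack
  rw [hsub]
  push_cast
  rw [mul_div_assoc', div_mul_eq_mul_div, eq_div_iff hgap_ne]
  refine mul_left_cancel₀ hM' ?_
  linear_combination (R ^ 2 - (‖a‖ : ℂ) ^ 2) * hjack - k * hcircle

end BoundarySchwarzPick

section FirstExit

open Set

lemma exists_first_exit {E X : Type*} [NormedAddCommGroup E] [ProperSpace E] [TopologicalSpace X]
    {p : E → X} {U : Set X} {r : ℝ} {z : E} (hU : IsOpen U) (hp : ContinuousOn p (ball 0 r))
    (hz : z ∈ ball (0 : E) r) (hpz : p z ∉ U) :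
    ∃ z₀ ∈ ball (0 : E) r, p z₀ ∉ U ∧ MapsTo p (ball 0 ‖z₀‖) U := by
  have hsub : closedBall (0 : E) ‖z‖ ⊆ ball 0 r := closedBall_subset_ball (mem_ball_zero_iff.1 hz)
  have hcompact : IsCompact (closedBall (0 : E) ‖z‖ ∩ p ⁻¹' Uᶜ) :=
    (isCompact_closedBall 0 ‖z‖).of_isClosed_subset
      ((hp.mono hsub).preimage_isClosed_of_isClosed isClosed_closedBall hU.isClosed_compl)
      inter_subset_left
  obtain ⟨z₀, ⟨hz₀, hpz₀⟩, hmin⟩ :=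
    hcompact.exists_isMinOn ⟨z, mem_closedBall_zero_iff.2 le_rfl, hpz⟩ continuous_norm.continuousOn
  refine ⟨z₀, hsub hz₀, hpz₀, fun w hw => by_contra fun hpw => ?_⟩
  rw [mem_ball_zero_iff] at hw
  have hw_mem : w ∈ closedBall (0 : E) ‖z‖ :=
    mem_closedBall_zero_iff.2 (hw.le.trans (mem_closedBall_zero_iff.1 hz₀))
  exact hw.not_ge (hmin ⟨hw_mem, hpw⟩)

lemma re_div_eq_half {c w : ℂ} (hw : w ≠ 0) (h : ‖w - c‖ = ‖c‖) : (c / w).re = 1 / 2 := by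
  have hpos := normSq_pos.2 hw
  have hsq : normSq (w - c) = normSq c := by rw [normSq_eq_norm_sq, h, normSq_eq_norm_sq]
  rw [div_re, ← add_div, div_eq_iff hpos.ne']
  simp only [normSq_apply, sub_re, sub_im] at hsq ⊢
  linarith

lemma mapsTo_ball_of_re_mul_logDeriv_lt {p : ℂ → ℂ} {c : ℂ} {r : ℝ}
    (hp : DifferentiableOn ℂ p (ball 0 r)) (hp0 : p 0 ∈ ball c ‖c‖)
    (hne : ∀ z ∈ ball 0 r, p z ≠ 0)
    (hlog : ∀ z ∈ ball 0 r, ‖p z - c‖ = ‖c‖ →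
      (z * logDeriv p z).re < ‖p z - p 0‖ ^ 2 / (2 * (‖c‖ ^ 2 - ‖p 0 - c‖ ^ 2))) :
    MapsTo p (ball 0 r) (ball c ‖c‖) := by
  intro z hz
  by_contra hpz
  obtain ⟨z₀, hz₀, hexit, hmaps⟩ := exists_first_exit isOpen_ball hp.continuousOn hz hpz
  have hz₀_ne : z₀ ≠ 0 := by
    rintro rfl
    exact hexit hp0
  have hc : ‖c‖ ≠ 0 := (pos_of_mem_ball hp0).ne'
  have hdiff : DifferentiableAt ℂ p z₀ := hp.differentiableAt (isOpen_ball.mem_nhds hz₀)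
  have hclosure : p z₀ ∈ closedBall c ‖c‖ := by
    rw [← closure_ball c hc]
    refine hdiff.continuousAt.continuousWithinAt.mem_closure (s := ball 0 ‖z₀‖) ?_ hmaps
    rw [closure_ball _ (norm_ne_zero_iff.2 hz₀_ne)]
    exact mem_closedBall_zero_iff.2 le_rfl
  have hcircle : ‖p z₀ - c‖ = ‖c‖ := by
    rw [← dist_eq_norm]
    exact le_antisymm hclosure (not_lt.1 hexit)
  obtain ⟨m, hm, hderiv⟩ := exists_le_mul_deriv_eq_of_mapsTo_ball hz₀_ne
    (hp.mono (ball_subset_ball (mem_ball_zero_iff.1 hz₀).le)) hdiff hmaps hcircle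
  have hlog_eq : z₀ * logDeriv p z₀ = m * (1 - c / p z₀) := by
    have := hne z₀ hz₀
    rw [logDeriv_apply, ← mul_div_assoc, hderiv]
    field_simp
  have hlt := hlog z₀ hz₀ hcircle
  rw [hlog_eq, re_ofReal_mul, sub_re, one_re, re_div_eq_half (hne z₀ hz₀) hcircle, mul_comm 2,
    ← div_div] at hlt
  linarith

end FirstExit

section ZeroFree

open Set

lemma mapsTo_ball_one_of_re_mul_logDeriv_lt_half {v : ℂ → ℂ} {r : ℝ}
    (hv : DifferentiableOn ℂ v (ball 0 r)) (h0 : v 0 = 1) (hne : ∀ z ∈ ball 0 r, v z ≠ 0)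
    (hlog : ∀ z ∈ ball 0 r, (z * logDeriv v z).re < 1 / 2) :
    MapsTo v (ball 0 r) (ball 1 1) := by
  have h := mapsTo_ball_of_re_mul_logDeriv_lt (c := 1) hv (by simp [h0]) hne
    (fun z hz hcircle => by
      rw [norm_one] at hcircle
      simpa [h0, hcircle] using hlog z hz)
  rwa [norm_one] at h

lemma exists_log_hasDerivAt_logDeriv {q : ℂ → ℂ} {c : ℂ} {r : ℝ} (hr : 0 < r)
    (hq : DifferentiableOn ℂ q (ball c r)) (hne : ∀ z ∈ ball c r, q z ≠ 0) :
    ∃ L : ℂ → ℂ, L c = log (q c) ∧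
      ∀ z ∈ ball c r, exp (L z) = q z ∧ HasDerivAt L (logDeriv q z) z := by
  have hc : c ∈ ball c r := mem_ball_self hr
  obtain ⟨L, hLc, hL⟩ :=
    ((hq.deriv isOpen_ball).div hq hne).isExactOn_ball.with_val_at c (log (q c))
  have hexp : ∀ z ∈ ball c r, HasDerivAt (fun w => exp (L w)) (exp (L z) * logDeriv q z) z :=
    fun z hz => (hL z hz).cexp
  obtain ⟨k, -, hk⟩ := (logDeriv_eqOn_iff
    (fun z hz => (hexp z hz).differentiableAt.differentiableWithinAt) hq isOpen_ball
    (convex_ball c r).isPreconnected hne (fun z _ => exp_ne_zero (L z))).1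
    (fun z hz => by rw [logDeriv_apply, (hexp z hz).deriv, mul_div_cancel_left₀ _ (exp_ne_zero _)])
  have hk_one : k = 1 := by
    have h := hk hc
    simp only [Pi.smul_apply, smul_eq_mul, hLc, exp_log (hne c hc)] at h
    exact (mul_eq_right₀ (hne c hc)).1 h.symm
  exact ⟨L, hLc, fun z hz => ⟨by simpa [hk_one] using hk hz, hL z hz⟩⟩

lemma re_pos_of_mem_ball_one {w : ℂ} (hw : w ∈ ball (1 : ℂ) 1) : 0 < w.re := by
  rw [mem_ball, dist_eq_norm] at hw
  have h := (abs_lt.1 ((abs_re_le_norm (w - 1)).trans_lt hw)).1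
  rw [sub_re, one_re] at h
  linarith

lemma sq_mem_slitPlane_of_re_pos {s : ℂ} (hs : 0 < s.re) : s ^ 2 ∈ slitPlane := by
  rw [mem_slitPlane_iff, sq, mul_re, mul_im]
  rcases eq_or_ne s.im 0 with h | h
  · left
    rw [h]
    nlinarith
  · right
    rw [mul_comm s.im, ← two_mul]
    positivity

/-- `v = q ^ (-1/2)` satisfies `Re (z v'/v) < 1/2`, hence `Re v > 0`, and `q = (1/v) ^ 2`. -/
lemma mapsTo_slitPlane_of_neg_one_lt_re_mul_logDeriv {q : ℂ → ℂ} {r : ℝ}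
    (hq : DifferentiableOn ℂ q (ball 0 r)) (h0 : q 0 = 1) (hne : ∀ z ∈ ball 0 r, q z ≠ 0)
    (hlog : ∀ z ∈ ball 0 r, -1 < (z * logDeriv q z).re) :
    MapsTo q (ball 0 r) slitPlane := by
  intro z hz
  obtain ⟨L, hL0, hL⟩ := exists_log_hasDerivAt_logDeriv (pos_of_mem_ball hz) hq hne
  set v : ℂ → ℂ := fun w => exp (-L w / 2)
  have hv : ∀ w ∈ ball 0 r, HasDerivAt v (v w * (-logDeriv q w / 2)) w := fun w hw =>
    ((hL w hw).2.neg.div_const 2).cexp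
  have hlog_v : ∀ w ∈ ball 0 r, w * logDeriv v w = ((-1 / 2 : ℝ) : ℂ) * (w * logDeriv q w) := by
    intro w hw
    rw [logDeriv_apply v, (hv w hw).deriv, mul_div_cancel_left₀ _ (exp_ne_zero _)]
    push_cast
    ring
  have hmaps : MapsTo v (ball 0 r) (ball 1 1) := mapsTo_ball_one_of_re_mul_logDeriv_lt_half
    (fun w hw => (hv w hw).differentiableAt.differentiableWithinAt)
    (by simp [v, hL0, h0]) (fun w _ => exp_ne_zero _) (fun w hw => by
      rw [hlog_v w hw, re_ofReal_mul]
      linarith [hlog w hw])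
  have hsq : q z = (v z)⁻¹ ^ 2 := by
    rw [← exp_neg, ← exp_nat_mul, ← (hL z hz).1]
    congr 1
    push_cast
    ring
  rw [hsq]
  refine sq_mem_slitPlane_of_re_pos ?_
  rw [inv_re]
  exact div_pos (re_pos_of_mem_ball_one (hmaps hz)) (normSq_pos.2 (exp_ne_zero _))

end ZeroFree

section Integration

open Set

lemma mapsTo_dslope_ball_of_mapsTo_deriv {f : ℂ → ℂ} {c : ℂ} {r R : ℝ}
    (hf : DifferentiableOn ℂ f (ball c r))
    (hmaps : MapsTo (deriv f) (ball c r) (ball (deriv f c) R)) :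
    MapsTo (dslope f c) (ball c r) (ball (deriv f c) R) := by
  intro z hz
  rcases eq_or_ne z c with rfl | hzc
  · simpa using hmaps hz
  have hr : 0 < r := pos_of_mem_ball hz
  have hR : 0 < R := pos_of_mem_ball (hmaps hz)
  have hsub : closedBall c (dist z c) ⊆ ball c r := closedBall_subset_ball hz
  have hbound : ∀ w ∈ closedBall c (dist z c), ‖deriv f w - deriv f c‖ ≤ R / r * dist z c := by
    intro w hw
    rw [← dist_eq_norm]
    exact (dist_le_div_mul_dist_of_mapsTo_ball (hf.deriv isOpen_ball)
      (fun x hx => ball_subset_closedBall (hmaps hx)) (hsub hw)).trans (by gcongr; exact hw)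
  have hmvt := (convex_closedBall c (dist z c)).norm_image_sub_le_of_norm_hasDerivWithin_le
    (f := fun w => f w - deriv f c * w) (f' := fun w => deriv f w - deriv f c)
    (fun w hw => ((hf.differentiableAt (isOpen_ball.mem_nhds (hsub hw))).hasDerivAt.sub
      (hasDerivAt_const_mul (deriv f c))).hasDerivWithinAt)
    hbound (mem_closedBall_self dist_nonneg) (mem_closedBall.2 le_rfl)
  have hpos : 0 < ‖z - c‖ := norm_pos_iff.2 (sub_ne_zero.2 hzc)
  have hlt : R / r * dist z c < R := by
    rw [div_mul_eq_mul_div, div_lt_iff₀ hr]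
    exact mul_lt_mul_of_pos_left hz hR
  have hfactor : f z - deriv f c * z - (f c - deriv f c * c) =
      (dslope f c z - deriv f c) * (z - c) := by
    linear_combination -(sub_smul_dslope f c z)
  rw [hfactor, norm_mul] at hmvt
  exact mem_ball_iff_norm.2 ((le_of_mul_le_mul_right hmvt hpos).trans_lt hlt)

lemma hasDerivAt_integral_radius {h : ℂ → ℂ} {r : ℝ} {z : ℂ}
    (hh : DifferentiableOn ℂ h (ball 0 r)) (hz : z ∈ ball (0 : ℂ) r) :
    HasDerivAt (fun w => ∫ t in (0 : ℝ)..1, h (t * w) * w) (h z) z := by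
  obtain ⟨H, hH0, hH⟩ := hh.isExactOn_ball.with_val_at 0 0
  have hint : ∀ w ∈ ball (0 : ℂ) r, ∫ t in (0 : ℝ)..1, h (t * w) * w = H w := by
    intro w hw
    have hmem : ∀ t ∈ Icc (0 : ℝ) 1, (0 : ℂ) + t • w ∈ ball (0 : ℂ) r := fun t ht =>
      (convex_ball (0 : ℂ) r).add_smul_mem (mem_ball_self (pos_of_mem_ball hw))
        (by simpa using hw) ht
    have hcont : ContinuousOn (fun t : ℝ => h (0 + t • w)) (Icc 0 1) :=
      hh.continuousOn.comp (by fun_prop) hmem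
    have h := intervalIntegral.integral_unitInterval_deriv_eq_sub hcont fun t ht => hH _ (hmem t ht)
    simpa [hH0, intervalIntegral.integral_mul_const, mul_comm w] using h
  exact (hH z hz).congr_of_eventuallyEq
    (Filter.eventuallyEq_of_mem (isOpen_ball.mem_nhds hz) hint)

end Integration

section LogDerivative

variable {f F G : ℂ → ℂ} {a b c z : ℂ}

lemma deriv_div_dslope_eq_one_add (h : DifferentiableAt ℂ (dslope f c) z)
    (hne : dslope f c z ≠ 0) :
    deriv f z / dslope f c z = 1 + (z - c) * logDeriv (dslope f c) z := by
  rw [deriv_eq_dslope_add h, logDeriv_apply]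
  field_simp

lemma logDeriv_cpow_const (hF : DifferentiableAt ℂ F z) (hFz : F z ∈ slitPlane) :
    logDeriv (fun w => F w ^ a) z = a * logDeriv F z := by
  have hne := slitPlane_ne_zero hFz
  rw [logDeriv_apply, (hF.hasDerivAt.cpow_const hFz).deriv, cpow_sub _ _ hne, cpow_one,
    logDeriv_apply]
  have : F z ^ a ≠ 0 := by simp [cpow_eq_zero_iff, hne]
  field_simp

lemma logDeriv_cpow_mul_cpow (hF : DifferentiableAt ℂ F z) (hG : DifferentiableAt ℂ G z)
    (hFz : F z ∈ slitPlane) (hGz : G z ∈ slitPlane) :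
    logDeriv (fun w => F w ^ a * G w ^ b) z = a * logDeriv F z + b * logDeriv G z := by
  rw [logDeriv_mul z (by simp [cpow_eq_zero_iff, slitPlane_ne_zero hFz])
    (by simp [cpow_eq_zero_iff, slitPlane_ne_zero hGz]) (hF.cpow_const hFz) (hG.cpow_const hGz),
    logDeriv_cpow_const hF hFz, logDeriv_cpow_const hG hGz]

end LogDerivative

section Operator

open Set

lemma one_add_mul_deriv_deriv_div (f : ℂ → ℂ) (z : ℂ) :
    1 + z * deriv (deriv f) z / deriv f z = 1 + z * logDeriv (deriv f) z := by
  rw [logDeriv_apply, mul_div_assoc]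

lemma norm_sub_one_sq_of_norm_sub_eq_norm {c : ℝ} {w : ℂ} (h : ‖w - c‖ = ‖(c : ℂ)‖) :
    ‖w - 1‖ ^ 2 = 1 - 2 * (1 - c) * w.re := by
  have hsq : normSq (w - c) = normSq c := by rw [normSq_eq_norm_sq, h, normSq_eq_norm_sq]
  rw [← normSq_eq_norm_sq]
  simp only [normSq_apply, sub_re, sub_im, ofReal_re, ofReal_im, one_re, one_im] at hsq ⊢
  linarith

/-- The class 𝒢: members of 𝔉 with `Re (1 + z f''/f') < 3/2` on the unit disk. -/
def Gclass (f : ℂ → ℂ) : Prop :=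
  Fclass f ∧ ∀ z ∈ ball (0 : ℂ) 1, (1 + z * deriv (deriv f) z / deriv f z).re < 3 / 2

/-- The integrand `(f(w)/w)^α (g'(w))^β` of `C_{α,β}[f,g]`, with `f(w)/w` continued across
`w = 0` by `f'(0)`. -/
noncomputable def operatorIntegrand (f g : ℂ → ℂ) (α β : ℝ) (w : ℂ) : ℂ :=
  dslope f 0 w ^ (α : ℂ) * deriv g w ^ (β : ℂ)

variable {f g C : ℂ → ℂ} {α β : ℝ} {z : ℂ}

namespace Fclass

lemma differentiableOn_deriv (hf : Fclass f) : DifferentiableOn ℂ (deriv f) (ball 0 1) :=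
  hf.1.deriv isOpen_ball

lemma differentiableOn_dslope (hf : Fclass f) : DifferentiableOn ℂ (dslope f 0) (ball 0 1) :=
  (Complex.differentiableOn_dslope (ball_mem_nhds 0 one_pos)).2 hf.1

end Fclass

lemma Kclass.mapsTo_deriv_slitPlane (hg : Kclass g) : MapsTo (deriv g) (ball 0 1) slitPlane :=
  mapsTo_slitPlane_of_neg_one_lt_re_mul_logDeriv hg.1.differentiableOn_deriv hg.1.2.2.1
    hg.1.2.2.2 fun z hz => by
      have h := hg.2 z hz
      rw [one_add_mul_deriv_deriv_div, add_re, one_re] at h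
      linarith

namespace Gclass

lemma re_mul_logDeriv_deriv_lt_half (hf : Gclass f) (hz : z ∈ ball (0 : ℂ) 1) :
    (z * logDeriv (deriv f) z).re < 1 / 2 := by
  have h := hf.2 z hz
  rw [one_add_mul_deriv_deriv_div, add_re, one_re] at h
  linarith

lemma mapsTo_dslope_slitPlane (hf : Gclass f) : MapsTo (dslope f 0) (ball 0 1) slitPlane := by
  have hderiv : MapsTo (deriv f) (ball 0 1) (ball (deriv f 0) 1) := by
    rw [hf.1.2.2.1]
    exact mapsTo_ball_one_of_re_mul_logDeriv_lt_half hf.1.differentiableOn_deriv hf.1.2.2.1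
      hf.1.2.2.2 fun z hz => hf.re_mul_logDeriv_deriv_lt_half hz
  have hdslope := mapsTo_dslope_ball_of_mapsTo_deriv hf.1.1 hderiv
  rw [hf.1.2.2.1] at hdslope
  exact hdslope.mono_right ball_one_subset_slitPlane

lemma deriv_div_dslope_add_mul_logDeriv (hf : Gclass f) (hz : z ∈ ball (0 : ℂ) 1) :
    deriv f z / dslope f 0 z + z * logDeriv (deriv f / dslope f 0) z =
      1 + z * logDeriv (deriv f) z := by
  have hball := isOpen_ball.mem_nhds hz
  have hdiff := hf.1.differentiableOn_dslope.differentiableAt hball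
  have hne := slitPlane_ne_zero (hf.mapsTo_dslope_slitPlane hz)
  have hlog : logDeriv (deriv f / dslope f 0) z =
      logDeriv (deriv f) z - logDeriv (dslope f 0) z :=
    logDeriv_div z (hf.1.2.2.2 z hz) hne (hf.1.differentiableOn_deriv.differentiableAt hball) hdiff
  rw [hlog, deriv_div_dslope_eq_one_add hdiff hne]
  ring

lemma mapsTo_deriv_div_dslope (hf : Gclass f) :
    MapsTo (deriv f / dslope f 0) (ball 0 1) (ball (2 / 3) (2 / 3)) := by
  have hradius : ‖(2 / 3 : ℂ)‖ = 2 / 3 := by norm_num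
  have hcentre : (deriv f / dslope f 0) 0 = 1 := by simp [hf.1.2.2.1]
  have hcentre_norm : ‖(1 : ℂ) - 2 / 3‖ = 1 / 3 := by norm_num
  have hne : ∀ z ∈ ball (0 : ℂ) 1, dslope f 0 z ≠ 0 := fun z hz =>
    slitPlane_ne_zero (hf.mapsTo_dslope_slitPlane hz)
  rw [← hradius]
  refine mapsTo_ball_of_re_mul_logDeriv_lt
    (hf.1.differentiableOn_deriv.div hf.1.differentiableOn_dslope hne) ?_
    (fun z hz => div_ne_zero (hf.1.2.2.2 z hz) (hne z hz)) (fun z hz hcircle => ?_)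
  · rw [mem_ball_iff_norm, hcentre, hcentre_norm, hradius]
    norm_num
  · have hsq := norm_sub_one_sq_of_norm_sub_eq_norm (c := 2 / 3)
      (by simpa only [ofReal_div, ofReal_ofNat] using hcircle)
    have hlog := congrArg re (hf.deriv_div_dslope_add_mul_logDeriv hz)
    rw [add_re, add_re, one_re, ← Pi.div_apply] at hlog
    rw [hcentre, hcentre_norm, hradius, hsq, lt_div_iff₀ (by norm_num)]
    linarith [hf.re_mul_logDeriv_deriv_lt_half hz]

lemma re_deriv_div_dslope_mem_Ioo (hf : Gclass f) (hz : z ∈ ball (0 : ℂ) 1) :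
    (deriv f z / dslope f 0 z).re ∈ Ioo 0 (4 / 3) := by
  have h := hf.mapsTo_deriv_div_dslope hz
  rw [mem_ball_iff_norm, Pi.div_apply] at h
  have habs := abs_lt.1 ((abs_re_le_norm _).trans_lt h)
  have hre : (2 / 3 : ℂ).re = 2 / 3 := by norm_num
  rw [sub_re, hre] at habs
  constructor <;> linarith

end Gclass

lemma differentiableOn_operatorIntegrand (hf : Gclass f) (hg : Kclass g) (α β : ℝ) :
    DifferentiableOn ℂ (operatorIntegrand f g α β) (ball 0 1) :=
  (hf.1.differentiableOn_dslope.cpow_const fun _ hz => hf.mapsTo_dslope_slitPlane hz).mul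
    (hg.1.differentiableOn_deriv.cpow_const fun _ hz => hg.mapsTo_deriv_slitPlane hz)

lemma integral_eq_integral_operatorIntegrand (f g : ℂ → ℂ) (h0 : f 0 = 0) (α β : ℝ) (z : ℂ) :
    ∫ t in (0 : ℝ)..1, (f (t * z) / (t * z)) ^ (α : ℂ) * deriv g (t * z) ^ (β : ℂ) * z =
      ∫ t in (0 : ℝ)..1, operatorIntegrand f g α β (t * z) * z := by
  refine intervalIntegral.integral_congr_ae (Filter.Eventually.of_forall fun t ht => ?_)
  rw [uIoc_of_le zero_le_one] at ht
  rcases eq_or_ne z 0 with rfl | hz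
  · simp only [mul_zero]
  · have htz : (t : ℂ) * z ≠ 0 := mul_ne_zero (ofReal_ne_zero.2 ht.1.ne') hz
    rw [operatorIntegrand, dslope_of_ne f htz, slope_def_field, h0, sub_zero, sub_zero]

lemma eqOn_deriv_operatorIntegrand (hf : Gclass f) (hg : Kclass g)
    (hC : ∀ z ∈ ball (0 : ℂ) 1, C z = ∫ t in (0 : ℝ)..1,
      (f (t * z) / (t * z)) ^ (α : ℂ) * deriv g (t * z) ^ (β : ℂ) * z) :
    EqOn (deriv C) (operatorIntegrand f g α β) (ball 0 1) := by
  intro z hz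
  refine ((hasDerivAt_integral_radius
    (differentiableOn_operatorIntegrand hf hg α β) hz).congr_of_eventuallyEq ?_).deriv
  filter_upwards [isOpen_ball.mem_nhds hz] with w hw
  rw [hC w hw, integral_eq_integral_operatorIntegrand f g hf.1.2.1]

lemma one_add_mul_logDeriv_operatorIntegrand (hf : Gclass f) (hg : Kclass g) (α β : ℝ)
    (hz : z ∈ ball (0 : ℂ) 1) :
    1 + z * logDeriv (operatorIntegrand f g α β) z =
      α * (deriv f z / dslope f 0 z) + β * (1 + z * deriv (deriv g) z / deriv g z) +
        (1 - α - β : ℝ) := by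
  have hball := isOpen_ball.mem_nhds hz
  have hdslope := hf.1.differentiableOn_dslope.differentiableAt hball
  have hdslope_mem := hf.mapsTo_dslope_slitPlane hz
  have hlog : logDeriv (operatorIntegrand f g α β) z =
      α * logDeriv (dslope f 0) z + β * logDeriv (deriv g) z :=
    logDeriv_cpow_mul_cpow hdslope (hg.1.differentiableOn_deriv.differentiableAt hball)
      hdslope_mem (hg.mapsTo_deriv_slitPlane hz)
  rw [hlog, one_add_mul_deriv_deriv_div,
    deriv_div_dslope_eq_one_add hdslope (slitPlane_ne_zero hdslope_mem)]
  push_cast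
  ring

end Operator

lemma mul_add_mul_add_one_sub_pos {α β P Q : ℝ} (hβ : 0 ≤ β) (h1 : 0 ≤ α → α + β ≤ 1)
    (h2 : α < 0 → 3 * β - α ≤ 3) (hP : P ∈ Set.Ioo 0 (4 / 3)) (hQ : 0 < Q) :
    0 < α * P + β * Q + (1 - α - β) := by
  have hβQ : 0 ≤ β * Q := mul_nonneg hβ hQ.le
  rcases lt_trichotomy α 0 with hα | rfl | hα
  · have hαP : α * (4 / 3) < α * P := mul_lt_mul_of_neg_left hP.2 hα
    linarith [h2 hα]
  · rcases hβ.eq_or_lt with rfl | hβ_pos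
    · norm_num
    · linarith [h1 le_rfl, mul_pos hβ_pos hQ]
  · linarith [h1 hα.le, mul_pos hα hP.1]

/-- for `f ∈ 𝒢`, `g ∈ 𝒦`, `β ≥ 0`, with `α + β ≤ 1` when `α ≥ 0` and
`3β - α ≤ 3` when `α < 0`, the operator `C_{α,β}[f,g]` is convex. -/
theorem stmt_16 (f g : ℂ → ℂ) (hf : Fclass f)
    (hfG : ∀ z ∈ ball (0:ℂ) 1,
      (1 + z * deriv (deriv f) z / deriv f z).re < 3 / 2)
    (hg : Kclass g)
    (α β : ℝ) (hβ : 0 ≤ β)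
    (h1 : 0 ≤ α → α + β ≤ 1) (h2 : α < 0 → 3 * β - α ≤ 3)
    (C : ℂ → ℂ)
    (hC : ∀ z ∈ ball (0:ℂ) 1,
      C z = ∫ t in (0:ℝ)..1,
        (f ((t : ℂ) * z) / ((t : ℂ) * z)) ^ (α : ℂ)
          * (deriv g ((t : ℂ) * z)) ^ (β : ℂ) * z) :
    ∀ z ∈ ball (0:ℂ) 1, 0 < (1 + z * deriv (deriv C) z / deriv C z).re := by
  intro z hz
  have hfG' : Gclass f := ⟨hf, hfG⟩
  have hderiv := eqOn_deriv_operatorIntegrand hfG' hg hC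
  have hlog : logDeriv (deriv C) z = logDeriv (operatorIntegrand f g α β) z := by
    rw [logDeriv_apply, logDeriv_apply, hderiv hz,
      (hderiv.eventuallyEq_of_mem (isOpen_ball.mem_nhds hz)).deriv_eq]
  rw [one_add_mul_deriv_deriv_div, hlog, one_add_mul_logDeriv_operatorIntegrand hfG' hg α β hz,
    add_re, add_re, re_ofReal_mul, re_ofReal_mul, ofReal_re]
  exact mul_add_mul_add_one_sub_pos hβ h1 h2 (hfG'.re_deriv_div_dslope_mem_Ioo hz) (hg.2 z hz)
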